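/- Let N ≥ 1 and c, c₀, C, Ω ∈ ℝ. Let L and G be smooth functions on the extended phase space ℝ^{2N+2} depending on (q,p) only with X_L(X_L(G)) = −2(cL + c₀)·G identically, and let γ be a smooth nonvanishing solution of γ' + cγ² + C = 0 on an open interval I. Define the sequence G_1 = G, G_{j+1} = X_L(G)·G_j + (1/j)·G·X_L(G_j). For positive integers s, r define the operator U_{2s,r}(h) = p_u·h + (2s/r²)·γ(u)·X_L(h), the operator V(h) = U_{2s,r}(U_{2s,r}(h)) + 2Ω·γ(u)^{−2}·h, and K̄_{2s,r} = V^s(G_r) (the s-th iterate of V applied to G_r). Let H = (1/2)p_u² − k²γ'(u)·L + k²c₀·γ(u)² + Ω/γ(u)², with k = m/n for positive integers m, n. Then: (i) if m = 2s is even, {H, K̄_{m,n}} = 0 at every point with u ∈ I; (ii) if m is odd, {H, K̄_{2m,2n}} = 0 at every point with u ∈ I. -/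

import Mathlib

/-!
Extended phase space ℝ^{2N+2} with coordinates (u, q, p_u, p),
canonical Poisson bracket (sign convention {q^i, p_i} = -1) and
Hamiltonian vector field X_L F = {L, F}.
-/

noncomputable section

/-- The extended phase space: a point is `(u, q, p_u, p)`. -/
abbrev PS (N : ℕ) : Type := ℝ × (Fin N → ℝ) × ℝ × (Fin N → ℝ)

/-- Partial derivative with respect to `u`. -/
def pdu {N : ℕ} (F : PS N → ℝ) (x : PS N) : ℝ :=
  deriv (fun t => F (t, x.2.1, x.2.2.1, x.2.2.2)) x.1

/-- Partial derivative with respect to `p_u`. -/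
def pdpu {N : ℕ} (F : PS N → ℝ) (x : PS N) : ℝ :=
  deriv (fun t => F (x.1, x.2.1, t, x.2.2.2)) x.2.2.1

/-- Partial derivative with respect to `q^i`. -/
def pdq {N : ℕ} (i : Fin N) (F : PS N → ℝ) (x : PS N) : ℝ :=
  deriv (fun t => F (x.1, Function.update x.2.1 i t, x.2.2.1, x.2.2.2)) (x.2.1 i)

/-- Partial derivative with respect to `p_i`. -/
def pdp {N : ℕ} (i : Fin N) (F : PS N → ℝ) (x : PS N) : ℝ :=
  deriv (fun t => F (x.1, x.2.1, x.2.2.1, Function.update x.2.2.2 i t)) (x.2.2.2 i)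

/-- The canonical Poisson bracket on the extended phase space, with the sign
convention `{q^i, p_i} = -1` of the paper. -/
def pbracket {N : ℕ} (F H : PS N → ℝ) (x : PS N) : ℝ :=
  (pdpu F x * pdu H x - pdu F x * pdpu H x)
    + ∑ i : Fin N, (pdp i F x * pdq i H x - pdq i F x * pdp i H x)

/-- The Hamiltonian vector field of `L` applied to `F`: `X_L F = {L, F}`. -/
def XL {N : ℕ} (L : PS N → ℝ) (F : PS N → ℝ) : PS N → ℝ :=
  fun x => pbracket L F x

/-- Functions independent of `u` and `p_u`. -/
def Indep {N : ℕ} (F : PS N → ℝ) : Prop :=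
  ∀ (u u' pu pu' : ℝ) (q p : Fin N → ℝ), F (u, q, pu, p) = F (u', q, pu', p)

theorem pdu_indep {N : ℕ} {F : PS N → ℝ} (hF : Indep F) (x : PS N) : pdu F x = 0 := by
  unfold pdu
  have : (fun t => F (t, x.2.1, x.2.2.1, x.2.2.2)) = fun _ => F (0, x.2.1, x.2.2.1, x.2.2.2) := by
    funext t; exact hF _ _ _ _ _ _
  rw [this]; simp

theorem pdpu_indep {N : ℕ} {F : PS N → ℝ} (hF : Indep F) (x : PS N) : pdpu F x = 0 := by
  unfold pdpu
  have : (fun t => F (x.1, x.2.1, t, x.2.2.2)) = fun _ => F (x.1, x.2.1, 0, x.2.2.2) := by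
    funext t; exact hF _ _ _ _ _ _
  rw [this]; simp

theorem XL_eq {N : ℕ} {L : PS N → ℝ} (hL : Indep L) (F : PS N → ℝ) (x : PS N) :
    XL L F x = ∑ i : Fin N, (pdp i L x * pdq i F x - pdq i L x * pdp i F x) := by
  simp [XL, pbracket, pdu_indep hL, pdpu_indep hL]

theorem pdq_fderiv {N : ℕ} (i : Fin N) {F : PS N → ℝ} {x : PS N} (hF : DifferentiableAt ℝ F x) :
    pdq i F x = fderiv ℝ F x (0, Pi.single i 1, 0, 0) := by
  unfold pdq
  have h1 : HasDerivAt (fun t : ℝ => ((x.1, Function.update x.2.1 i t, x.2.2.1, x.2.2.2) : PS N))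
      (0, Pi.single i 1, 0, 0) (x.2.1 i) :=
    (hasDerivAt_const _ _).prodMk ((hasDerivAt_update x.2.1 i (x.2.1 i)).prodMk
      ((hasDerivAt_const _ _).prodMk (hasDerivAt_const _ _)))
  have h2 : HasFDerivAt F (fderiv ℝ F x)
      ((fun t : ℝ => ((x.1, Function.update x.2.1 i t, x.2.2.1, x.2.2.2) : PS N)) (x.2.1 i)) := by
    simpa using hF.hasFDerivAt
  exact (h2.comp_hasDerivAt _ h1).deriv

theorem pdp_fderiv {N : ℕ} (i : Fin N) {F : PS N → ℝ} {x : PS N} (hF : DifferentiableAt ℝ F x) :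
    pdp i F x = fderiv ℝ F x (0, 0, 0, Pi.single i 1) := by
  unfold pdp
  have h1 : HasDerivAt (fun t : ℝ => ((x.1, x.2.1, x.2.2.1, Function.update x.2.2.2 i t) : PS N))
      (0, 0, 0, Pi.single i 1) (x.2.2.2 i) :=
    (hasDerivAt_const _ _).prodMk ((hasDerivAt_const _ _).prodMk
      ((hasDerivAt_const _ _).prodMk (hasDerivAt_update x.2.2.2 i (x.2.2.2 i))))
  have h2 : HasFDerivAt F (fderiv ℝ F x)
      ((fun t : ℝ => ((x.1, x.2.1, x.2.2.1, Function.update x.2.2.2 i t) : PS N)) (x.2.2.2 i)) := by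
    simpa using hF.hasFDerivAt
  exact (h2.comp_hasDerivAt _ h1).deriv

/-- The Hamiltonian vector of `L` in the `(q,p)` directions. -/
def hvec {N : ℕ} (L : PS N → ℝ) (x : PS N) : PS N :=
  ∑ i : Fin N, (pdp i L x • ((0, Pi.single i 1, 0, 0) : PS N)
    - pdq i L x • ((0, 0, 0, Pi.single i 1) : PS N))

theorem XL_fderiv {N : ℕ} {L : PS N → ℝ} (hL : Indep L) {F : PS N → ℝ} {x : PS N}
    (hF : DifferentiableAt ℝ F x) : XL L F x = fderiv ℝ F x (hvec L x) := by
  rw [XL_eq hL, hvec, map_sum]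
  refine Finset.sum_congr rfl fun i _ => ?_
  rw [map_sub, map_smul, map_smul, pdq_fderiv i hF, pdp_fderiv i hF]
  simp

theorem XL_self {N : ℕ} {L : PS N → ℝ} (hL : Indep L) (x : PS N) : XL L L x = 0 := by
  rw [XL_eq hL]
  exact Finset.sum_eq_zero fun i _ => by ring

theorem XL_contDiff {N : ℕ} {L F : PS N → ℝ} (hL : Indep L) (hLs : ContDiff ℝ (⊤ : ℕ∞) L)
    (hF : ContDiff ℝ (⊤ : ℕ∞) F) : ContDiff ℝ (⊤ : ℕ∞) (XL L F) := by
  have hd : ∀ {E : PS N → ℝ}, ContDiff ℝ (⊤ : ℕ∞) E → ∀ v : PS N,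
      ContDiff ℝ (⊤ : ℕ∞) (fun x => fderiv ℝ E x v) := fun hE v =>
    (hE.fderiv_right (m := (⊤ : ℕ∞)) (by simp)).clm_apply contDiff_const
  have hdiff : ∀ {E : PS N → ℝ}, ContDiff ℝ (⊤ : ℕ∞) E → Differentiable ℝ E := fun hE =>
    hE.differentiable (by simp)
  have : XL L F = fun x => ∑ i : Fin N,
      (fderiv ℝ L x (0, 0, 0, Pi.single i 1) * fderiv ℝ F x (0, Pi.single i 1, 0, 0)
      - fderiv ℝ L x (0, Pi.single i 1, 0, 0) * fderiv ℝ F x (0, 0, 0, Pi.single i 1)) := by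
    funext x
    rw [XL_eq hL]
    refine Finset.sum_congr rfl fun i _ => ?_
    rw [pdq_fderiv i (hdiff hLs x), pdp_fderiv i (hdiff hLs x), pdq_fderiv i (hdiff hF x),
      pdp_fderiv i (hdiff hF x)]
  rw [this]
  exact ContDiff.sum fun i _ => ((hd hLs _).mul (hd hF _)).sub ((hd hLs _).mul (hd hF _))

theorem XL_indep {N : ℕ} {L F : PS N → ℝ} (hL : Indep L) (hF : Indep F) : Indep (XL L F) := by
  intro u u' pu pu' q p
  rw [XL_eq hL, XL_eq hL]
  have h1 : ∀ {E : PS N → ℝ}, Indep E → ∀ i, pdq i E (u, q, pu, p) = pdq i E (u', q, pu', p) := by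
    intro E hE i
    unfold pdq
    congr 1
    funext t; exact hE _ _ _ _ _ _
  have h2 : ∀ {E : PS N → ℝ}, Indep E → ∀ i, pdp i E (u, q, pu, p) = pdp i E (u', q, pu', p) := by
    intro E hE i
    unfold pdp
    congr 1
    funext t; exact hE _ _ _ _ _ _
  refine Finset.sum_congr rfl fun i _ => ?_
  rw [h1 hL, h1 hF, h2 hL, h2 hF]

theorem XL_mul {N : ℕ} {L A B : PS N → ℝ} (hL : Indep L) {x : PS N} (hA : DifferentiableAt ℝ A x)
    (hB : DifferentiableAt ℝ B x) :
    XL L (fun y => A y * B y) x = XL L A x * B x + A x * XL L B x := by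
  rw [XL_fderiv hL (hA.fun_mul hB), XL_fderiv hL hA, XL_fderiv hL hB, fderiv_fun_mul hA hB]
  simp; ring

theorem XL_add {N : ℕ} {L A B : PS N → ℝ} (hL : Indep L) {x : PS N} (hA : DifferentiableAt ℝ A x)
    (hB : DifferentiableAt ℝ B x) :
    XL L (fun y => A y + B y) x = XL L A x + XL L B x := by
  rw [XL_fderiv hL (hA.fun_add hB), XL_fderiv hL hA, XL_fderiv hL hB, fderiv_fun_add hA hB]
  simp

theorem XL_compL {N : ℕ} {L : PS N → ℝ} (hL : Indep L) {x : PS N} (hLd : DifferentiableAt ℝ L x)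
    {φ : ℝ → ℝ} (hφ : Differentiable ℝ φ) : XL L (fun y => φ (L y)) x = 0 := by
  have h := (hφ (L x)).hasDerivAt.comp_hasFDerivAt x hLd.hasFDerivAt
  have h' : HasFDerivAt (fun y => φ (L y)) (deriv φ (L x) • fderiv ℝ L x) x := h
  rw [XL_fderiv hL h'.differentiableAt, h'.fderiv]
  have := XL_self hL x
  rw [XL_fderiv hL hLd] at this
  simp [this]

theorem XL_slice {N : ℕ} {L : PS N → ℝ} (hL : Indep L) (F F' : PS N → ℝ) (x : PS N)
    (h : ∀ q p, F (x.1, q, x.2.2.1, p) = F' (x.1, q, x.2.2.1, p)) : XL L F x = XL L F' x := by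
  rw [XL_eq hL, XL_eq hL]
  simp only [pdq, pdp, h]

theorem XL_PQ {N : ℕ} {L g0 g1 : PS N → ℝ} (hL : Indep L) (hLd : Differentiable ℝ L)
    (hg0 : Differentiable ℝ g0) (hg1 : Differentiable ℝ g1) (P Q : ℝ → ℝ → ℝ → ℝ)
    (hP : ∀ u p, Differentiable ℝ (P u p)) (hQ : ∀ u p, Differentiable ℝ (Q u p)) (x : PS N) :
    XL L (fun y => P y.1 y.2.2.1 (L y) * g0 y + Q y.1 y.2.2.1 (L y) * g1 y) x
      = P x.1 x.2.2.1 (L x) * XL L g0 x + Q x.1 x.2.2.1 (L x) * XL L g1 x := by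
  rw [XL_slice hL _ (fun y => P x.1 x.2.2.1 (L y) * g0 y + Q x.1 x.2.2.1 (L y) * g1 y) x
    (fun q p => rfl)]
  have dP : DifferentiableAt ℝ (fun y => P x.1 x.2.2.1 (L y)) x :=
    ((hP x.1 x.2.2.1).comp hLd) x
  have dQ : DifferentiableAt ℝ (fun y => Q x.1 x.2.2.1 (L y)) x :=
    ((hQ x.1 x.2.2.1).comp hLd) x
  rw [XL_add hL (dP.fun_mul (hg0 x)) (dQ.fun_mul (hg1 x)), XL_mul hL dP (hg0 x), XL_mul hL dQ (hg1 x),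
    XL_compL hL (hLd x) (hP _ _), XL_compL hL (hLd x) (hQ _ _)]
  ring

theorem Gs_props {N : ℕ} (c c₀ : ℝ) (L G : PS N → ℝ)
    (hLs : ContDiff ℝ (⊤ : ℕ∞) L) (hGs : ContDiff ℝ (⊤ : ℕ∞) G)
    (hL : Indep L) (hG : Indep G)
    (hext : ∀ x : PS N, XL L (XL L G) x = -2 * (c * L x + c₀) * G x)
    (Gs : ℕ → PS N → ℝ) (hGs1 : Gs 1 = G)
    (hGsrec : ∀ j : ℕ, 1 ≤ j → Gs (j + 1) =
      fun x => XL L G x * Gs j x + (1 / (j : ℝ)) * G x * XL L (Gs j) x)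
    (j : ℕ) (hj : 1 ≤ j) :
    ContDiff ℝ (⊤ : ℕ∞) (Gs j) ∧ Indep (Gs j) ∧
      ∀ x, XL L (XL L (Gs j)) x = (j : ℝ) ^ 2 * (-2 * (c * L x + c₀)) * Gs j x := by
  induction j, hj using Nat.le_induction with
  | base => rw [hGs1]; exact ⟨hGs, hG, fun x => by rw [hext]; push_cast; ring⟩
  | succ j hj ih =>
    obtain ⟨h1, h2, h3⟩ := ih
    have hj0 : (j : ℝ) ≠ 0 := by positivity
    have hdiff : ∀ {E : PS N → ℝ}, ContDiff ℝ (⊤ : ℕ∞) E → Differentiable ℝ E := fun hE =>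
      hE.differentiable (by simp)
    have sG' := XL_contDiff hL hLs hGs
    have sg' := XL_contDiff hL hLs h1
    have dL := hdiff hLs
    have dG := hdiff hGs
    have dG' := hdiff sG'
    have dg := hdiff h1
    have dg' := hdiff sg'
    have dlam : Differentiable ℝ (fun y => -2 * (c * L y + c₀)) := by fun_prop
    have hlam : ∀ x, XL L (fun y => -2 * (c * L y + c₀)) x = 0 := fun x =>
      XL_compL (φ := fun l => -2 * (c * l + c₀)) hL (dL x) (by fun_prop)
    have hconst : ∀ (a : ℝ) x, XL L (fun _ => a) x = 0 := fun a x =>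
      XL_compL (φ := fun _ => a) hL (dL x) (by fun_prop)
    have e1 : ∀ x, XL L (Gs (j + 1)) x = ((j : ℝ) + 1) * ((-2 * (c * L x + c₀)) * (G x * Gs j x)
        + (1 / (j : ℝ)) * (XL L G x * XL L (Gs j) x)) := by
      intro x
      rw [hGsrec j hj]
      rw [XL_add hL (by fun_prop) (by fun_prop), XL_mul hL (by fun_prop) (by fun_prop),
        XL_mul hL (A := fun x => (1 / (j : ℝ)) * G x) (by fun_prop) (by fun_prop),
        XL_mul hL (A := fun x => (1 / (j : ℝ))) (by fun_prop) (by fun_prop), hconst, hext, h3]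
      field_simp
      ring
    refine ⟨?_, ?_, ?_⟩
    · rw [hGsrec j hj]
      exact (sG'.mul h1).add ((contDiff_const.mul hGs).mul sg')
    · rw [hGsrec j hj]
      intro u u' pu pu' q p
      have a1 := XL_indep hL hG u u' pu pu' q p
      have a2 := XL_indep hL h2 u u' pu pu' q p
      have a3 := hG u u' pu pu' q p
      have a4 := h2 u u' pu pu' q p
      simp only [a1, a2, a3, a4]
    · intro x
      rw [show XL L (Gs (j + 1)) = _ from funext e1]
      rw [XL_mul hL (A := fun _ => (j : ℝ) + 1) (by fun_prop) (by fun_prop), hconst,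
        XL_add hL (by fun_prop) (by fun_prop),
        XL_mul hL (A := fun y => -2 * (c * L y + c₀)) (by fun_prop) (by fun_prop), hlam,
        XL_mul hL (A := G) (by fun_prop) (by fun_prop),
        XL_mul hL (A := fun _ => (1 / (j : ℝ))) (by fun_prop) (by fun_prop), hconst,
        XL_mul hL (A := XL L G) (by fun_prop) (by fun_prop), hext, h3, hGsrec j hj]
      push_cast
      field_simp
      ring

theorem iter_form {N : ℕ} (c c₀ Ω : ℝ) (L g0 g1 : PS N → ℝ) (hL : Indep L)
    (hLd : Differentiable ℝ L) (hg0 : Differentiable ℝ g0) (hg1 : Differentiable ℝ g1)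
    (r α : ℝ) (h01 : ∀ x, XL L g0 x = g1 x)
    (h10 : ∀ x, XL L g1 x = r ^ 2 * (-2 * (c * L x + c₀)) * g0 x)
    (I : Set ℝ) (γ : ℝ → ℝ) (hγ : Differentiable ℝ γ) (hγne : ∀ u ∈ I, γ u ≠ 0)
    (U V : (PS N → ℝ) → PS N → ℝ)
    (hU : ∀ (h : PS N → ℝ) (x : PS N), U h x = x.2.2.1 * h x + α * γ x.1 * XL L h x)
    (hV : ∀ (h : PS N → ℝ) (x : PS N), V h x = U (U h) x + 2 * Ω * ((γ x.1) ^ 2)⁻¹ * h x)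
    (j : ℕ) :
    ∃ P Q : ℝ → ℝ → ℝ → ℝ, (∀ u p, Differentiable ℝ (P u p)) ∧ (∀ u p, Differentiable ℝ (Q u p)) ∧
      (V^[j] g0 = fun x => P x.1 x.2.2.1 (L x) * g0 x + Q x.1 x.2.2.1 (L x) * g1 x) ∧
      ∀ u ∈ I, ∀ p l, ∃ Pu Pp Qu Qp : ℝ,
        HasDerivAt (fun t => P t p l) Pu u ∧ HasDerivAt (fun t => P u t l) Pp p ∧
        HasDerivAt (fun t => Q t p l) Qu u ∧ HasDerivAt (fun t => Q u t l) Qp p ∧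
        p * Pu + ((α * r) ^ 2 * γ u * deriv γ u * (-2 * (c * l + c₀))
          + 2 * Ω * deriv γ u / γ u ^ 3) * Pp
          = 2 * j * α * deriv γ u * (r ^ 2 * (-2 * (c * l + c₀))) * Q u p l ∧
        p * Qu + ((α * r) ^ 2 * γ u * deriv γ u * (-2 * (c * l + c₀))
          + 2 * Ω * deriv γ u / γ u ^ 3) * Qp
          = 2 * j * α * deriv γ u * P u p l := by
  induction j with
  | zero =>
    refine ⟨fun _ _ _ => 1, fun _ _ _ => 0, by fun_prop, by fun_prop, ?_, ?_⟩
    · funext x; simp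
    · intro u _ p l
      exact ⟨0, 0, 0, 0, hasDerivAt_const _ _, hasDerivAt_const _ _, hasDerivAt_const _ _,
        hasDerivAt_const _ _, by simp, by simp⟩
  | succ j ih =>
    obtain ⟨P, Q, hP, hQ, hK, hd⟩ := ih
    have hUK : ∀ (P Q : ℝ → ℝ → ℝ → ℝ), (∀ u p, Differentiable ℝ (P u p)) →
        (∀ u p, Differentiable ℝ (Q u p)) →
        U (fun x => P x.1 x.2.2.1 (L x) * g0 x + Q x.1 x.2.2.1 (L x) * g1 x) =
        fun x => (fun u p l => p * P u p l + α * γ u * (r ^ 2 * (-2 * (c * l + c₀))) * Q u p l)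
            x.1 x.2.2.1 (L x) * g0 x
          + (fun u p l => p * Q u p l + α * γ u * P u p l) x.1 x.2.2.1 (L x) * g1 x := by
      intro P Q hP hQ
      funext x
      rw [hU, XL_PQ hL hLd hg0 hg1 P Q hP hQ, h01, h10]
      ring
    refine ⟨fun u p l => (p ^ 2 + α ^ 2 * γ u ^ 2 * (r ^ 2 * (-2 * (c * l + c₀)))
        + 2 * Ω * (γ u ^ 2)⁻¹) * P u p l
        + 2 * p * α * γ u * (r ^ 2 * (-2 * (c * l + c₀))) * Q u p l,
      fun u p l => (p ^ 2 + α ^ 2 * γ u ^ 2 * (r ^ 2 * (-2 * (c * l + c₀)))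
        + 2 * Ω * (γ u ^ 2)⁻¹) * Q u p l + 2 * p * α * γ u * P u p l, ?_, ?_, ?_, ?_⟩
    · intro u p
      have := hP u p
      have := hQ u p
      fun_prop
    · intro u p
      have := hP u p
      have := hQ u p
      fun_prop
    · rw [Function.iterate_succ_apply', hK]
      funext x
      rw [hV, hUK P Q hP hQ,
        hUK (fun u p l => p * P u p l + α * γ u * (r ^ 2 * (-2 * (c * l + c₀))) * Q u p l)
          (fun u p l => p * Q u p l + α * γ u * P u p l)]
      · ring
      · intro u p
        have := hP u p
        have := hQ u p
        fun_prop
      · intro u p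
        have := hP u p
        have := hQ u p
        fun_prop
    · intro u hu p l
      obtain ⟨Pu, Pp, Qu, Qp, d1, d2, d3, d4, e1, e2⟩ := hd u hu p l
      have hg := hγne u hu
      have dγ := (hγ u).hasDerivAt
      set γ' := deriv γ u with hγ'
      have dAu : HasDerivAt (fun t => p ^ 2 + α ^ 2 * γ t ^ 2 * (r ^ 2 * (-2 * (c * l + c₀)))
          + 2 * Ω * (γ t ^ 2)⁻¹) (2 * α ^ 2 * γ u * γ' * (r ^ 2 * (-2 * (c * l + c₀)))
            - 4 * Ω * γ' / γ u ^ 3) u := by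
        have := ((((dγ.pow 2).const_mul (α ^ 2)).mul_const (r ^ 2 * (-2 * (c * l + c₀)))).const_add
          (p ^ 2)).add (((dγ.pow 2).inv (pow_ne_zero 2 hg)).const_mul (2 * Ω))
        refine this.congr_deriv ?_
        simp only [Pi.pow_apply]
        field_simp
        push_cast
        ring
      have dAp : HasDerivAt (fun t => t ^ 2 + α ^ 2 * γ u ^ 2 * (r ^ 2 * (-2 * (c * l + c₀)))
          + 2 * Ω * (γ u ^ 2)⁻¹) (2 * p) p := by
        have := (((hasDerivAt_id p).pow 2).add_const
          (α ^ 2 * γ u ^ 2 * (r ^ 2 * (-2 * (c * l + c₀))))).add_const (2 * Ω * (γ u ^ 2)⁻¹)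
        refine this.congr_deriv ?_
        simp
      have dBu : HasDerivAt (fun t => 2 * p * α * γ t) (2 * p * α * γ') u := dγ.const_mul _
      have dBp : HasDerivAt (fun t => 2 * t * α * γ u) (2 * α * γ u) p := by
        have := (((hasDerivAt_id p).const_mul 2).mul_const α).mul_const (γ u)
        refine this.congr_deriv ?_
        simp
      refine ⟨_, _, _, _, (dAu.mul d1).add ((dBu.mul_const _).mul d3),
        (dAp.mul d2).add ((dBp.mul_const _).mul d4),
        (dAu.mul d3).add (dBu.mul d1), (dAp.mul d4).add (dBp.mul d2), ?_, ?_⟩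
      · push_cast
        linear_combination (p ^ 2 + α ^ 2 * γ u ^ 2 * (r ^ 2 * (-2 * (c * l + c₀)))
            + 2 * Ω * (γ u ^ 2)⁻¹) * e1
          + 2 * p * α * γ u * (r ^ 2 * (-2 * (c * l + c₀))) * e2
          + (4 * Ω * α * γ' * (r ^ 2 * (-2 * (c * l + c₀))) * Q u p l * (γ u ^ 2)⁻¹) *
            (mul_inv_cancel₀ hg)
      · push_cast
        linear_combination (p ^ 2 + α ^ 2 * γ u ^ 2 * (r ^ 2 * (-2 * (c * l + c₀)))
            + 2 * Ω * (γ u ^ 2)⁻¹) * e2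
          + 2 * p * α * γ u * e1
          + (4 * Ω * α * γ' * P u p l * (γ u ^ 2)⁻¹) * (mul_inv_cancel₀ hg)

theorem deriv_aux (A B D E : ℝ) (f : ℝ → ℝ) (x : ℝ) :
    deriv (fun t => A - B * f t + D + E) x = -B * deriv f x := by
  have : (fun t => A - B * f t + D + E) = fun t => (-B) * f t + (A + D + E) := by
    funext t; ring
  rw [this, deriv_add_const, deriv_const_mul_field]

theorem core {N : ℕ} (c c₀ C Ω : ℝ) (L g0 g1 : PS N → ℝ) (hL : Indep L)
    (hLd : Differentiable ℝ L) (hg0 : Differentiable ℝ g0) (hg1 : Differentiable ℝ g1)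
    (i0 : Indep g0) (i1 : Indep g1)
    (r α k : ℝ) (h01 : ∀ x, XL L g0 x = g1 x)
    (h10 : ∀ x, XL L g1 x = r ^ 2 * (-2 * (c * L x + c₀)) * g0 x)
    (I : Set ℝ) (hIopen : IsOpen I)
    (γ : ℝ → ℝ) (hγ : Differentiable ℝ γ) (hγne : ∀ u ∈ I, γ u ≠ 0)
    (hode : ∀ u ∈ I, deriv γ u + c * γ u ^ 2 + C = 0)
    (U V : (PS N → ℝ) → PS N → ℝ)
    (hU : ∀ (h : PS N → ℝ) (x : PS N), U h x = x.2.2.1 * h x + α * γ x.1 * XL L h x)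
    (hV : ∀ (h : PS N → ℝ) (x : PS N), V h x = U (U h) x + 2 * Ω * ((γ x.1) ^ 2)⁻¹ * h x)
    (s : ℕ) (hk : k = α * r) (hs : k ^ 2 = 2 * s * α)
    (H : PS N → ℝ)
    (hH : ∀ x : PS N, H x = (1 / 2) * x.2.2.1 ^ 2 - k ^ 2 * deriv γ x.1 * L x
      + k ^ 2 * c₀ * γ x.1 ^ 2 + Ω / γ x.1 ^ 2)
    (x : PS N) (hx : x.1 ∈ I) : pbracket H (V^[s] g0) x = 0 := by
  obtain ⟨P, Q, hP, hQ, hK, hd⟩ := iter_form c c₀ Ω L g0 g1 hL hLd hg0 hg1 r α h01 h10 I γ hγ hγne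
    U V hU hV s
  rw [hK]
  obtain ⟨u, q, pu, p⟩ := x
  change u ∈ I at hx
  obtain ⟨Pu, Pp, Qu, Qp, d1, d2, d3, d4, e1, e2⟩ := hd u hx pu (L (u, q, pu, p))
  have hg := hγne u hx
  have dγ := (hγ u).hasDerivAt
  have dγ' : HasDerivAt (deriv γ) (-2 * c * γ u * deriv γ u) u := by
    have h1 : HasDerivAt (fun t => -c * γ t ^ 2 - C) (-2 * c * γ u * deriv γ u) u := by
      have := ((dγ.pow 2).const_mul (-c)).sub_const C
      refine this.congr_deriv ?_
      push_cast
      ring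
    refine h1.congr_of_eventuallyEq ?_
    filter_upwards [hIopen.mem_nhds hx] with t ht
    linarith [hode t ht]
  have hHpu : pdpu H (u, q, pu, p) = pu := by
    unfold pdpu
    have : (fun t => H (u, q, t, p)) = fun t => (1 / 2) * t ^ 2 +
        (- k ^ 2 * deriv γ u * L (u, q, pu, p) + k ^ 2 * c₀ * γ u ^ 2 + Ω / γ u ^ 2) := by
      funext t
      rw [hH, hL u u t pu q p]
      ring
    change deriv (fun t => H (u, q, t, p)) pu = pu
    rw [this]
    have h2 := (((hasDerivAt_id pu).pow 2).const_mul (1 / 2 : ℝ)).add_const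
      (- k ^ 2 * deriv γ u * L (u, q, pu, p) + k ^ 2 * c₀ * γ u ^ 2 + Ω / γ u ^ 2)
    refine (h2.congr_deriv ?_).deriv
    simp
  have hHu : pdu H (u, q, pu, p) = 2 * k ^ 2 * γ u * deriv γ u * (c * L (u, q, pu, p) + c₀)
      - 2 * Ω * deriv γ u / γ u ^ 3 := by
    unfold pdu
    have : (fun t => H (t, q, pu, p)) = fun t => (1 / 2) * pu ^ 2 - k ^ 2 * deriv γ t *
        L (u, q, pu, p) + k ^ 2 * c₀ * γ t ^ 2 + Ω * (γ t ^ 2)⁻¹ := by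
      funext t
      rw [hH, hL t u pu pu q p]
      ring
    change deriv (fun t => H (t, q, pu, p)) u = _
    rw [this]
    have h2 := ((((dγ'.const_mul (k ^ 2)).mul_const (L (u, q, pu, p))).const_sub
      ((1 / 2) * pu ^ 2)).add ((dγ.pow 2).const_mul (k ^ 2 * c₀))).add
      (((dγ.pow 2).inv (pow_ne_zero 2 hg)).const_mul Ω)
    refine (h2.congr_deriv ?_).deriv
    simp only [Pi.pow_apply]
    field_simp
    push_cast
    ring
  have hHq : ∀ i, pdq i H (u, q, pu, p) = - (k ^ 2 * deriv γ u) * pdq i L (u, q, pu, p) := by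
    intro i
    unfold pdq
    simp only [hH]
    exact deriv_aux _ _ _ _ _ _
  have hHp : ∀ i, pdp i H (u, q, pu, p) = - (k ^ 2 * deriv γ u) * pdp i L (u, q, pu, p) := by
    intro i
    unfold pdp
    simp only [hH]
    exact deriv_aux _ _ _ _ _ _
  set K : PS N → ℝ := fun x => P x.1 x.2.2.1 (L x) * g0 x + Q x.1 x.2.2.1 (L x) * g1 x with hKdef
  have hsum : ∑ i : Fin N, (pdp i H (u, q, pu, p) * pdq i K (u, q, pu, p)
      - pdq i H (u, q, pu, p) * pdp i K (u, q, pu, p))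
      = - (k ^ 2 * deriv γ u) * XL L K (u, q, pu, p) := by
    rw [XL_eq hL, Finset.mul_sum]
    refine Finset.sum_congr rfl fun i _ => ?_
    rw [hHq, hHp]
    ring
  have hKu : pdu K (u, q, pu, p) = Pu * g0 (u, q, pu, p) + Qu * g1 (u, q, pu, p) := by
    unfold pdu
    change deriv (fun t => K (t, q, pu, p)) u = _
    have : (fun t => K (t, q, pu, p)) = fun t => P t pu (L (u, q, pu, p)) * g0 (u, q, pu, p)
        + Q t pu (L (u, q, pu, p)) * g1 (u, q, pu, p) := by
      funext t
      simp only [hKdef]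
      rw [hL t u pu pu q p, i0 t u pu pu q p, i1 t u pu pu q p]
    rw [this]
    exact ((d1.mul_const _).add (d3.mul_const _)).deriv
  have hKp : pdpu K (u, q, pu, p) = Pp * g0 (u, q, pu, p) + Qp * g1 (u, q, pu, p) := by
    unfold pdpu
    change deriv (fun t => K (u, q, t, p)) pu = _
    have : (fun t => K (u, q, t, p)) = fun t => P u t (L (u, q, pu, p)) * g0 (u, q, pu, p)
        + Q u t (L (u, q, pu, p)) * g1 (u, q, pu, p) := by
      funext t
      simp only [hKdef]
      rw [hL u u t pu q p, i0 u u t pu q p, i1 u u t pu q p]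
    rw [this]
    exact ((d2.mul_const _).add (d4.mul_const _)).deriv
  unfold pbracket
  rw [hsum, hHpu, hHu, hKu, hKp, hKdef, XL_PQ hL hLd hg0 hg1 P Q hP hQ, h01, h10]
  rw [← hk] at e1 e2
  rw [← hs] at e1 e2
  simp only
  linear_combination g0 (u, q, pu, p) * e1 + g1 (u, q, pu, p) * e2

/-- For an extension `H = ½p_u² - k²γ'L + k²c₀γ² + Ω/γ²` of a
Hamiltonian `L` admitting a solution `G` of `X_L²G = -2(cL+c₀)G`, the characteristic
functions `K̄_{2s,r} = (U_{2s,r}² + 2Ωγ⁻²)^s (G_r)` give first integrals: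
`K̄_{m,n}` when `m = 2s` is even, and `K̄_{2m,2n}` when `m` is odd. -/
theorem extended_hamiltonian_first_integral_Omega
    (N : ℕ) (hN : 1 ≤ N) (m n : ℕ) (hm : 0 < m) (hn : 0 < n)
    (c c₀ C Ω : ℝ) (L G : PS N → ℝ)
    (hLsmooth : ContDiff ℝ (⊤ : ℕ∞) L) (hGsmooth : ContDiff ℝ (⊤ : ℕ∞) G)
    (hLqp : ∀ (u u' pu pu' : ℝ) (q p : Fin N → ℝ),
      L (u, q, pu, p) = L (u', q, pu', p))
    (hGqp : ∀ (u u' pu pu' : ℝ) (q p : Fin N → ℝ),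
      G (u, q, pu, p) = G (u', q, pu', p))
    (hext : ∀ x : PS N, XL L (XL L G) x = -2 * (c * L x + c₀) * G x)
    (I : Set ℝ) (hIopen : IsOpen I) (hIconn : I.OrdConnected) (hInonempty : I.Nonempty)
    (γ : ℝ → ℝ) (hγ : ContDiff ℝ (⊤ : ℕ∞) γ) (hγne : ∀ u ∈ I, γ u ≠ 0)
    (hode : ∀ u ∈ I, deriv γ u + c * γ u ^ 2 + C = 0)
    (Gs : ℕ → PS N → ℝ) (hGs1 : Gs 1 = G)
    (hGsrec : ∀ j : ℕ, 1 ≤ j → Gs (j + 1) =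
      fun x => XL L G x * Gs j x + (1 / (j : ℝ)) * G x * XL L (Gs j) x)
    (U : ℕ → ℕ → (PS N → ℝ) → PS N → ℝ)
    (hU : ∀ (a b : ℕ) (h : PS N → ℝ) (x : PS N),
      U a b h x = x.2.2.1 * h x + ((a : ℝ) / (b : ℝ) ^ 2) * γ x.1 * XL L h x)
    (V : ℕ → ℕ → (PS N → ℝ) → PS N → ℝ)
    (hV : ∀ (a b : ℕ) (h : PS N → ℝ) (x : PS N),
      V a b h x = U a b (U a b h) x + 2 * Ω * ((γ x.1) ^ 2)⁻¹ * h x)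
    (H : PS N → ℝ)
    (hH : ∀ x : PS N, H x = (1 / 2) * x.2.2.1 ^ 2
      - ((m : ℝ) / (n : ℝ)) ^ 2 * deriv γ x.1 * L x
      + ((m : ℝ) / (n : ℝ)) ^ 2 * c₀ * γ x.1 ^ 2 + Ω / γ x.1 ^ 2) :
    (∀ s : ℕ, m = 2 * s →
      ∀ x : PS N, x.1 ∈ I → pbracket H ((V m n)^[s] (Gs n)) x = 0) ∧
    (Odd m →
      ∀ x : PS N, x.1 ∈ I → pbracket H ((V (2 * m) (2 * n))^[m] (Gs (2 * n))) x = 0) := by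
  have hdiff : ∀ {E : PS N → ℝ}, ContDiff ℝ (⊤ : ℕ∞) E → Differentiable ℝ E := fun hE =>
    hE.differentiable (by simp)
  have hL : Indep L := hLqp
  have hnR : (n : ℝ) ≠ 0 := by positivity
  have main : ∀ (a b s : ℕ), 1 ≤ b → a = 2 * s → (a : ℝ) / b = (m : ℝ) / n →
      ∀ x : PS N, x.1 ∈ I → pbracket H ((V a b)^[s] (Gs b)) x = 0 := by
    intro a b s hb has hab x hx
    have hbR : (b : ℝ) ≠ 0 := by positivity
    obtain ⟨s1, s2, s3⟩ := Gs_props c c₀ L G hLsmooth hGsmooth hL hGqp hext Gs hGs1 hGsrec b hb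
    refine core c c₀ C Ω L (Gs b) (XL L (Gs b)) hL (hdiff hLsmooth) (hdiff s1)
      (hdiff (XL_contDiff hL hLsmooth s1)) s2 (XL_indep hL s2) b ((a : ℝ) / (b : ℝ) ^ 2)
      ((m : ℝ) / n) (fun _ => rfl) s3 I hIopen γ (hγ.differentiable (by simp)) hγne hode
      (U a b) (V a b) (hU a b) (hV a b) s ?_ ?_ H hH x hx
    · rw [← hab]; field_simp
    · rw [← hab, has]; push_cast; field_simp
  refine ⟨fun s hs => main m n s hn hs rfl, fun _ => main (2 * m) (2 * n) m (by omega) rfl ?_⟩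
  push_cast
  field_simp
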